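/- $L_{-3}(2) = \frac{2}{15} \sum_{k=1}^{\infty} \frac{48^k}{k(2k-1)\binom{4k}{2k}\binom{2k}{k}}$. -/

import Mathlib

open Filter Topology

/-- The Dirichlet L-value `L_{-3}(2) = ∑_{k ≥ 0} (1/(3k+1)^2 - 1/(3k+2)^2)`. -/
noncomputable def Lm3at2 : ℝ := ∑' k : ℕ, (1 / (3*(k:ℝ)+1)^2 - 1 / (3*(k:ℝ)+2)^2)

/-!
The summand is the case `x = 0` of a family `T(x, k)` for which `x T(x, k)` satisfies a
Wilf–Zeilberger equation, so that `φ(x) = x ∑ₖ T(x, k)` has the rational forward difference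
`g(x) = 4 / ((6x + 1)(6x + 5))`. Since `x φ(x)` is monotone, `φ` has the same limit at infinity
along `ℕ` and along `x + ℕ`, which forces `φ(x) = ∑ⱼ (g(j) - g(x + j))`. Dividing by `x` and letting
`x → 0` gives `∑ₖ T(0, k) = ∑ⱼ (6 / (6j + 1)² - 6 / (6j + 5)²)`, and the right-hand side is
`6 (1 + 1/4) L₋₃(2)`, the factor `1 + 1/4` removing the Euler factor at `2`.
-/

theorem monotoneOn_div_mul_add {𝕜 : Type*} [Field 𝕜] [LinearOrder 𝕜] [IsStrictOrderedRing 𝕜]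
    {a b : 𝕜} (ha : 0 ≤ a) (hb : 0 < b) :
    MonotoneOn (fun x => x / (a * x + b)) (Set.Ici 0) := by
  intro x hx y hy hxy
  have hx : 0 ≤ x := hx
  have hy : 0 ≤ y := hy
  rw [div_le_div_iff₀ (by positivity) (by positivity)]
  linarith [mul_le_mul_of_nonneg_right hxy hb.le]

theorem tendsto_atTop_of_monotoneOn_mul_self {f : ℝ → ℝ} {l : ℝ}
    (hf : MonotoneOn (fun x => x * f x) (Set.Ioi 0))
    (hl : Tendsto (fun n : ℕ => f n) atTop (𝓝 l)) : Tendsto f atTop (𝓝 l) := by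
  have lower : Tendsto (fun x : ℝ => (⌊x⌋₊ : ℝ) / x * f ⌊x⌋₊) atTop (𝓝 l) := by
    simpa using tendsto_nat_floor_div_atTop.mul (hl.comp (tendsto_nat_floor_atTop (α := ℝ)))
  have upper : Tendsto (fun x : ℝ => (⌈x⌉₊ : ℝ) / x * f ⌈x⌉₊) atTop (𝓝 l) := by
    simpa using tendsto_nat_ceil_div_atTop.mul (hl.comp (tendsto_nat_ceil_atTop (α := ℝ)))
  refine tendsto_of_tendsto_of_tendsto_of_le_of_le' lower upper ?_ ?_
  all_goals
    filter_upwards [eventually_ge_atTop 1] with x hx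
    have hx₀ : 0 < x := zero_lt_one.trans_le hx
    rw [div_mul_eq_mul_div]
  · rw [div_le_iff₀ hx₀, mul_comm (f x)]
    exact hf (Set.mem_Ioi.2 (Nat.cast_pos.2 (Nat.floor_pos.2 hx))) hx₀ (Nat.floor_le hx₀.le)
  · rw [le_div_iff₀ hx₀, mul_comm (f x)]
    exact hf hx₀ (Set.mem_Ioi.2 (Nat.cast_pos.2 (Nat.ceil_pos.2 hx₀))) (Nat.le_ceil x)

theorem add_natCast_eq_add_sum_of_forward_difference {R M : Type*} [Semiring R] [PartialOrder R]
    [IsOrderedRing R] [AddCommMonoid M] {f g : R → M} {x : R}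
    (hfg : ∀ y, 0 ≤ y → f (y + 1) = f y + g y) (hx : 0 ≤ x) (n : ℕ) :
    f (x + n) = f x + ∑ j ∈ Finset.range n, g (x + j) := by
  induction n with
  | zero => simp
  | succ n ih =>
    rw [Finset.sum_range_succ, ← add_assoc, ← ih, Nat.cast_succ, ← add_assoc,
      hfg _ (by positivity)]

theorem hasSum_sub_of_forward_difference {f g : ℝ → ℝ} {x : ℝ}
    (hfg : ∀ y, 0 ≤ y → f (y + 1) = f y + g y)
    (hf : MonotoneOn (fun y => y * f y) (Set.Ioi 0))
    (hg : AntitoneOn g (Set.Ici 0)) (hsum : Summable fun j : ℕ => g j) (hx : 0 ≤ x) :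
    HasSum (fun j : ℕ => g j - g (x + j)) (f x - f 0) := by
  have sum_eq (n : ℕ) :
      ∑ j ∈ Finset.range n, (g j - g (x + j)) = f n - f (x + n) + (f x - f 0) := by
    have h₀ := add_natCast_eq_add_sum_of_forward_difference hfg le_rfl n
    simp only [zero_add] at h₀
    rw [Finset.sum_sub_distrib, h₀, add_natCast_eq_add_sum_of_forward_difference hfg hx]
    ring
  have lim_nat : Tendsto (fun n : ℕ => f n) atTop (𝓝 (f 0 + ∑' j : ℕ, g j)) := by
    refine (hsum.hasSum.tendsto_sum_nat.const_add (f 0)).congr fun n => ?_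
    simpa using (add_natCast_eq_add_sum_of_forward_difference hfg le_rfl n).symm
  have lim_shift : Tendsto (fun n : ℕ => f (x + n)) atTop (𝓝 (f 0 + ∑' j : ℕ, g j)) :=
    (tendsto_atTop_of_monotoneOn_mul_self hf lim_nat).comp
      (tendsto_atTop_add_const_left _ x tendsto_natCast_atTop_atTop)
  have nonneg (j : ℕ) : 0 ≤ g j - g (x + j) :=
    sub_nonneg.2 <| hg (Set.mem_Ici.2 j.cast_nonneg)
      (Set.mem_Ici.2 (add_nonneg hx j.cast_nonneg)) (le_add_of_nonneg_left hx)
  rw [hasSum_iff_tendsto_nat_of_nonneg nonneg]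
  simpa [sum_eq] using (lim_nat.sub lim_shift).add_const (f x - f 0)

theorem summable_one_div_natCast_add_one_sq : Summable fun j : ℕ => 1 / ((j : ℝ) + 1) ^ 2 := by
  simpa using (summable_nat_add_iff 1).2 (Real.summable_one_div_nat_pow.2 one_lt_two)

/-- The ratio `T(x, k + 1) / T(x, k)` of consecutive terms of the Wilf–Zeilberger family. -/
noncomputable def wzRatio (x : ℝ) (k : ℕ) : ℝ :=
  12 * (k + 2) * (x + k + 1) * (6 * x + 2 * k + 1) /
    ((2 * k + 3) * (6 * x + 4 * k + 5) * (6 * x + 4 * k + 7))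

/-- The hypergeometric family `T(x, k)` that interpolates the series for `L₋₃(2)`, recovered up to
a constant factor at `x = 0`. -/
noncomputable def wzTerm (x : ℝ) (k : ℕ) : ℝ :=
  12 / ((6 * x + 1) * (6 * x + 3)) * ∏ i ∈ Finset.range k, wzRatio x i

/-- The Wilf–Zeilberger mate `G(x, k)` of `F(x, k) = x T(x, k)`, with the sign chosen so that
`F(x + 1, k) - F(x, k) = G(x, k) - G(x, k + 1)`. -/
noncomputable def wzMate (x : ℝ) (k : ℕ) : ℝ :=
  (k + 1 + 2 * x) * (2 * k + 1) / (6 * x + 4 * k + 5) * wzTerm x k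

/-- The function `φ(x) = x ∑ₖ T(x, k)`. -/
noncomputable def wzSum (x : ℝ) : ℝ := x * ∑' k, wzTerm x k

/-- The forward difference `g` of `wzSum`, which is `wzMate` at `k = 0`. -/
noncomputable def wzStep (x : ℝ) : ℝ := 4 / ((6 * x + 1) * (6 * x + 5))

/-- The quotient `(g(j) - g(x + j)) / x`, written so that it is also meaningful at `x = 0`. -/
noncomputable def wzStepSlope (x : ℝ) (j : ℕ) : ℝ :=
  6 / ((6 * j + 1) * (6 * j + 6 * x + 1)) - 6 / ((6 * j + 5) * (6 * j + 6 * x + 5))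

section Term

variable {x y : ℝ}

theorem wzRatio_pos (hx : 0 ≤ x) (k : ℕ) : 0 < wzRatio x k := by
  unfold wzRatio
  positivity

theorem wzTerm_pos (hx : 0 ≤ x) (k : ℕ) : 0 < wzTerm x k :=
  mul_pos (by positivity) (Finset.prod_pos fun i _ => wzRatio_pos hx i)

theorem wzTerm_succ (x : ℝ) (k : ℕ) : wzTerm x (k + 1) = wzTerm x k * wzRatio x k := by
  rw [wzTerm, wzTerm, Finset.prod_range_succ, mul_assoc]

theorem monotoneOn_wzRatio (k : ℕ) : MonotoneOn (wzRatio · k) (Set.Ici 0) := by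
  have split (x : ℝ) : wzRatio x k = 12 * (k + 2) / (2 * k + 3) *
      ((x + k + 1) * (6 * x + 2 * k + 1) / ((6 * x + 4 * k + 5) * (6 * x + 4 * k + 7))) := by
    rw [wzRatio, div_mul_div_comm]
    ring
  intro x hx y _ hxy
  have hx : 0 ≤ x := hx
  obtain ⟨d, hd, rfl⟩ := exists_nonneg_add_of_le hxy
  have cross : 0 ≤ (x + d + k + 1) * (6 * (x + d) + 2 * k + 1) *
        ((6 * x + 4 * k + 5) * (6 * x + 4 * k + 7)) -
      (x + k + 1) * (6 * x + 2 * k + 1) *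
        ((6 * (x + d) + 4 * k + 5) * (6 * (x + d) + 4 * k + 7)) := by
    ring_nf
    positivity
  simp only [split]
  gcongr ?_ * ?_
  rw [div_le_div_iff₀ (by positivity) (by positivity)]
  exact sub_nonneg.1 cross

theorem monotoneOn_prod_wzRatio (k : ℕ) :
    MonotoneOn (fun x => ∏ i ∈ Finset.range k, wzRatio x i) (Set.Ici 0) := fun _ hx _ hy hxy =>
  Finset.prod_le_prod (fun i _ => (wzRatio_pos hx i).le) fun i _ => monotoneOn_wzRatio i hx hy hxy

theorem monotoneOn_sq_mul_wzTerm (k : ℕ) :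
    MonotoneOn (fun x => x ^ 2 * wzTerm x k) (Set.Ici 0) := by
  have split (x : ℝ) : x ^ 2 * wzTerm x k =
      12 * (x / (6 * x + 1) * (x / (6 * x + 3)) * ∏ i ∈ Finset.range k, wzRatio x i) := by
    rw [wzTerm, div_mul_div_comm]
    ring
  intro x hx y hy hxy
  have hx' : 0 ≤ x := hx
  have hy' : 0 ≤ y := hy
  simp only [split]
  gcongr ?_ * (?_ * ?_ * ?_)
  · exact Finset.prod_nonneg fun i _ => (wzRatio_pos hx i).le
  · exact monotoneOn_div_mul_add (by norm_num) one_pos hx hy hxy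
  · exact monotoneOn_div_mul_add (by norm_num) three_pos hx hy hxy
  · exact monotoneOn_prod_wzRatio k hx hy hxy

theorem wzTerm_le_mul_wzTerm (hx : 0 ≤ x) (hxy : x ≤ y) (k : ℕ) :
    wzTerm x k ≤ (6 * y + 1) * (6 * y + 3) / 3 * wzTerm y k := by
  have hy : 0 ≤ y := hx.trans hxy
  calc wzTerm x k ≤ 4 * ∏ i ∈ Finset.range k, wzRatio y i := by
        refine mul_le_mul ?_ (monotoneOn_prod_wzRatio k hx hy hxy)
          (Finset.prod_nonneg fun i _ => (wzRatio_pos hx i).le) zero_le_four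
        rw [div_le_iff₀ (by positivity)]
        nlinarith
    _ = (6 * y + 1) * (6 * y + 3) / 3 * wzTerm y k := by
        rw [wzTerm]
        field_simp
        ring

theorem continuousOn_wzTerm (k : ℕ) : ContinuousOn (wzTerm · k) (Set.Ici 0) := by
  have ratio (i : ℕ) : ContinuousOn (wzRatio · i) (Set.Ici 0) := by
    refine ContinuousOn.div (by fun_prop) (by fun_prop) fun x hx => ?_
    have hx : 0 ≤ x := hx
    positivity
  refine ContinuousOn.mul (ContinuousOn.div (by fun_prop) (by fun_prop) fun x hx => ?_)
    (continuousOn_finsetProd _ fun i _ => ratio i)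
  have hx : 0 ≤ x := hx
  positivity

end Term

section Summability

variable {x : ℝ}

theorem tendsto_wzRatio_atTop (x : ℝ) : Tendsto (wzRatio x) atTop (𝓝 (3 / 4)) := by
  have h₁ := tendsto_add_mul_div_add_mul_atTop_nhds (2 : ℝ) 3 1 two_ne_zero
  have h₂ := tendsto_add_mul_div_add_mul_atTop_nhds (x + 1) (6 * x + 5) 1 four_ne_zero
  have h₃ := tendsto_add_mul_div_add_mul_atTop_nhds (6 * x + 1) (6 * x + 7) 2 four_ne_zero
  have h := ((h₁.mul h₂).mul h₃).const_mul 12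
  rw [show (12 : ℝ) * (1 / 2 * (1 / 4) * (2 / 4)) = 3 / 4 by norm_num] at h
  refine h.congr fun k => ?_
  rw [wzRatio, div_mul_div_comm, div_mul_div_comm, mul_div_assoc']
  ring_nf

theorem summable_add_one_mul_wzTerm (hx : 0 ≤ x) : Summable fun k : ℕ => (k + 1) * wzTerm x k := by
  have pos (k : ℕ) : 0 < (k + 1) * wzTerm x k := mul_pos (by positivity) (wzTerm_pos hx k)
  refine summable_of_ratio_test_tendsto_lt_one (l := 3 / 4) (by norm_num)
    (Eventually.of_forall fun k => (pos k).ne') ?_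
  have hk := tendsto_add_mul_div_add_mul_atTop_nhds (2 : ℝ) 1 1 one_ne_zero
  have h := hk.mul (tendsto_wzRatio_atTop x)
  rw [div_one, one_mul] at h
  refine h.congr fun k => ?_
  rw [Real.norm_of_nonneg (pos _).le, Real.norm_of_nonneg (pos _).le, wzTerm_succ]
  have := (wzTerm_pos hx k).ne'
  push_cast
  field_simp
  ring

theorem summable_wzTerm (hx : 0 ≤ x) : Summable (wzTerm x) :=
  .of_nonneg_of_le (fun k => (wzTerm_pos hx k).le)
    (fun k => le_mul_of_one_le_left (wzTerm_pos hx k).le (by simp))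
    (summable_add_one_mul_wzTerm hx)

theorem summable_wzMate (hx : 0 ≤ x) : Summable (wzMate x) := by
  refine .of_nonneg_of_le (fun k => mul_nonneg (by positivity) (wzTerm_pos hx k).le) (fun k => ?_)
    ((summable_add_one_mul_wzTerm hx).mul_left (1 + 2 * x))
  rw [← mul_assoc]
  refine mul_le_mul_of_nonneg_right ?_ (wzTerm_pos hx k).le
  rw [mul_div_assoc]
  have factor_le : (k + 1 + 2 * x) ≤ (1 + 2 * x) * (k + 1) := by
    linarith [mul_nonneg hx k.cast_nonneg]
  refine (mul_le_of_le_one_right (by positivity) ?_).trans factor_le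
  rw [div_le_one (by positivity)]
  linarith [k.cast_nonneg (α := ℝ)]

theorem continuousOn_tsum_wzTerm (b : ℝ) :
    ContinuousOn (fun x => ∑' k, wzTerm x k) (Set.Icc 0 b) := by
  rcases lt_or_ge b 0 with hb | hb
  · simp [Set.Icc_eq_empty_of_lt hb]
  refine continuousOn_tsum (fun k => (continuousOn_wzTerm k).mono Set.Icc_subset_Ici_self)
    ((summable_wzTerm hb).mul_left ((6 * b + 1) * (6 * b + 3) / 3)) fun k x hx => ?_
  rw [Real.norm_of_nonneg (wzTerm_pos hx.1 k).le]
  exact wzTerm_le_mul_wzTerm hx.1 hx.2 k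

theorem monotoneOn_mul_wzSum : MonotoneOn (fun x => x * wzSum x) (Set.Ici 0) := by
  intro x hx y hy hxy
  simp only [wzSum, ← mul_assoc, ← sq, ← tsum_mul_left]
  exact Summable.tsum_le_tsum (fun k => monotoneOn_sq_mul_wzTerm k hx hy hxy)
    ((summable_wzTerm hx).mul_left _) ((summable_wzTerm hy).mul_left _)

end Summability

section WilfZeilberger

variable {x : ℝ}

theorem add_one_mul_wzTerm_add_one (hx : 0 ≤ x) (k : ℕ) :
    (x + 1) * wzTerm (x + 1) k = wzTerm x k *
      ((6 * x + 2 * k + 1) * (6 * x + 2 * k + 3) * (6 * x + 2 * k + 5) * (x + k + 1) /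
        ((6 * x + 4 * k + 5) * (6 * x + 4 * k + 7) * (6 * x + 4 * k + 9))) := by
  induction k with
  | zero =>
    simp only [wzTerm, Finset.range_zero, Finset.prod_empty, Nat.cast_zero]
    rw [show 6 * (x + 1) + 1 = 6 * x + 7 by ring, show 6 * (x + 1) + 3 = 6 * x + 9 by ring]
    field_simp
    ring
  | succ k ih =>
    rw [wzTerm_succ, wzTerm_succ, ← mul_assoc, ih, wzRatio, wzRatio]
    push_cast
    rw [show 6 * (x + 1) + 4 * (k : ℝ) + 5 = 6 * x + 4 * k + 11 by ring,
      show 6 * (x + 1) + 4 * (k : ℝ) + 7 = 6 * x + 4 * k + 13 by ring,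
      show 6 * x + 4 * ((k : ℝ) + 1) + 5 = 6 * x + 4 * k + 9 by ring,
      show 6 * x + 4 * ((k : ℝ) + 1) + 7 = 6 * x + 4 * k + 11 by ring,
      show 6 * x + 4 * ((k : ℝ) + 1) + 9 = 6 * x + 4 * k + 13 by ring]
    field_simp
    ring

theorem add_one_mul_wzTerm_sub_mul_wzTerm (hx : 0 ≤ x) (k : ℕ) :
    (x + 1) * wzTerm (x + 1) k - x * wzTerm x k = wzMate x k - wzMate x (k + 1) := by
  rw [add_one_mul_wzTerm_add_one hx, wzMate, wzMate, wzTerm_succ, wzRatio]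
  push_cast
  rw [show 6 * x + 4 * ((k : ℝ) + 1) + 5 = 6 * x + 4 * k + 9 by ring]
  field_simp
  ring

theorem wzMate_zero (hx : 0 ≤ x) : wzMate x 0 = wzStep x := by
  simp only [wzMate, wzTerm, wzStep, Finset.range_zero, Finset.prod_empty, Nat.cast_zero]
  field_simp
  ring

theorem wzSum_add_one (hx : 0 ≤ x) : wzSum (x + 1) = wzSum x + wzStep x := by
  have hx₁ : 0 ≤ x + 1 := by positivity
  have telescope : wzSum (x + 1) - wzSum x = wzMate x 0 := calc
    wzSum (x + 1) - wzSum x = ∑' k, ((x + 1) * wzTerm (x + 1) k - x * wzTerm x k) := by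
      rw [((summable_wzTerm hx₁).mul_left _).tsum_sub ((summable_wzTerm hx).mul_left _),
        tsum_mul_left, tsum_mul_left, wzSum, wzSum]
    _ = ∑' k, wzMate x k - ∑' k, wzMate x (k + 1) := by
      rw [tsum_congr (add_one_mul_wzTerm_sub_mul_wzTerm hx),
        (summable_wzMate hx).tsum_sub ((summable_nat_add_iff 1).2 (summable_wzMate hx))]
    _ = wzMate x 0 := by
      rw [(summable_wzMate hx).tsum_eq_zero_add, add_sub_cancel_right]
  rw [← wzMate_zero hx, ← telescope, add_sub_cancel]

end WilfZeilberger

section Step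

variable {x : ℝ}

theorem antitoneOn_wzStep : AntitoneOn wzStep (Set.Ici 0) := by
  intro x hx y hy hxy
  have hx : 0 ≤ x := hx
  have hy : 0 ≤ y := hy
  unfold wzStep
  gcongr

theorem summable_wzStep : Summable fun j : ℕ => wzStep j := by
  refine .of_nonneg_of_le (fun j => ?_) (fun j => ?_)
    (summable_one_div_natCast_add_one_sq.mul_left 4)
  · unfold wzStep
    positivity
  · rw [wzStep, mul_one_div, sq]
    gcongr <;> linarith [j.cast_nonneg (α := ℝ)]

theorem wzStep_sub_wzStep_add (hx : 0 ≤ x) (j : ℕ) :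
    wzStep j - wzStep (x + j) = x * wzStepSlope x j := by
  rw [wzStep, wzStep, wzStepSlope, show 6 * (x + (j : ℝ)) + 1 = 6 * j + 6 * x + 1 by ring,
    show 6 * (x + (j : ℝ)) + 5 = 6 * j + 6 * x + 5 by ring]
  field_simp
  ring

theorem wzStepSlope_nonneg (hx : 0 ≤ x) (j : ℕ) : 0 ≤ wzStepSlope x j := by
  rw [wzStepSlope, sub_nonneg]
  gcongr <;> norm_num

theorem wzStepSlope_le (hx : 0 ≤ x) (j : ℕ) : wzStepSlope x j ≤ 6 * (1 / ((j : ℝ) + 1) ^ 2) := by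
  refine (sub_le_self _ (by positivity)).trans ?_
  rw [mul_one_div, sq]
  gcongr <;> linarith [j.cast_nonneg (α := ℝ)]

theorem continuousOn_wzStepSlope (j : ℕ) : ContinuousOn (wzStepSlope · j) (Set.Ici 0) := by
  refine ContinuousOn.sub ?_ ?_ <;>
  · refine ContinuousOn.div (by fun_prop) (by fun_prop) fun x hx => ?_
    have hx : 0 ≤ x := hx
    positivity

theorem continuousOn_tsum_wzStepSlope :
    ContinuousOn (fun x => ∑' j, wzStepSlope x j) (Set.Ici 0) := by
  refine continuousOn_tsum continuousOn_wzStepSlope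
    (summable_one_div_natCast_add_one_sq.mul_left 6) fun j x hx => ?_
  rw [Real.norm_of_nonneg (wzStepSlope_nonneg hx j)]
  exact wzStepSlope_le hx j

end Step

theorem tsum_wzTerm_of_pos {x : ℝ} (hx : 0 < x) : ∑' k, wzTerm x k = ∑' j, wzStepSlope x j := by
  have h := (hasSum_sub_of_forward_difference (fun _ => wzSum_add_one)
    (monotoneOn_mul_wzSum.mono Set.Ioi_subset_Ici_self) antitoneOn_wzStep summable_wzStep
    hx.le).tsum_eq
  simp only [wzStep_sub_wzStep_add hx.le, tsum_mul_left, wzSum, zero_mul, sub_zero] at h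
  exact (mul_left_cancel₀ hx.ne' h).symm

theorem tsum_wzTerm_zero : ∑' k, wzTerm 0 k = ∑' j, wzStepSlope 0 j := by
  have eqOn : Set.EqOn (fun x => ∑' k, wzTerm x k) (fun x => ∑' j, wzStepSlope x j)
      (Set.Icc 0 1) :=
    Set.EqOn.of_subset_closure (s := Set.Ioc 0 1) (fun _ hx => tsum_wzTerm_of_pos hx.1)
      (continuousOn_tsum_wzTerm 1) (continuousOn_tsum_wzStepSlope.mono Set.Icc_subset_Ici_self)
      Set.Ioc_subset_Icc_self (closure_Ioc zero_ne_one).ge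
  exact eqOn (Set.left_mem_Icc.2 zero_le_one)

theorem summable_Lm3at2_term :
    Summable fun k : ℕ => 1 / (3 * (k : ℝ) + 1) ^ 2 - 1 / (3 * (k : ℝ) + 2) ^ 2 := by
  refine .of_nonneg_of_le (fun k => ?_) (fun k => ?_) summable_one_div_natCast_add_one_sq
  · rw [sub_nonneg]
    gcongr
    norm_num
  · refine (sub_le_self _ (by positivity)).trans ?_
    gcongr
    linarith [k.cast_nonneg (α := ℝ)]

theorem tsum_one_div_six_mul_add_one_sq_sub :
    ∑' j : ℕ, (1 / (6 * (j : ℝ) + 1) ^ 2 - 1 / (6 * (j : ℝ) + 5) ^ 2) = 5 / 4 * Lm3at2 := by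
  let a (k : ℕ) : ℝ := 1 / (3 * (k : ℝ) + 1) ^ 2 - 1 / (3 * (k : ℝ) + 2) ^ 2
  have ha : Summable a := summable_Lm3at2_term
  have even : Summable fun j => a (2 * j) :=
    ha.comp_injective (mul_right_injective₀ two_ne_zero)
  have odd : Summable fun j => a (2 * j + 1) :=
    ha.comp_injective ((add_left_injective 1).comp (mul_right_injective₀ two_ne_zero))
  have term (j : ℕ) : 1 / (6 * (j : ℝ) + 1) ^ 2 - 1 / (6 * (j : ℝ) + 5) ^ 2 =
      a (2 * j) + a (2 * j + 1) + 1 / 4 * a j := by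
    simp only [a]
    push_cast
    rw [show 3 * (2 * (j : ℝ)) + 1 = 6 * j + 1 by ring,
      show 3 * (2 * (j : ℝ)) + 2 = 2 * (3 * j + 1) by ring,
      show 3 * (2 * (j : ℝ) + 1) + 1 = 2 * (3 * j + 2) by ring,
      show 3 * (2 * (j : ℝ) + 1) + 2 = 6 * j + 5 by ring, mul_pow, mul_pow]
    field_simp
    ring
  have hL : ∑' k, a k = Lm3at2 := rfl
  rw [tsum_congr term, (even.add odd).tsum_add (ha.mul_left _), even.tsum_add odd,
    tsum_even_add_odd even odd, tsum_mul_left, hL]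
  ring

theorem tsum_wzStepSlope_zero : ∑' j, wzStepSlope 0 j = 15 / 2 * Lm3at2 := by
  have term (j : ℕ) : wzStepSlope 0 j =
      6 * (1 / (6 * (j : ℝ) + 1) ^ 2 - 1 / (6 * (j : ℝ) + 5) ^ 2) := by
    simp only [wzStepSlope, mul_zero, add_zero]
    ring
  rw [tsum_congr term, tsum_mul_left, tsum_one_div_six_mul_add_one_sq_sub]
  ring

theorem mul_centralBinom_two_mul_succ (n : ℕ) :
    (n + 1) * (2 * n + 1) * (2 * (n + 1)).centralBinom =
      2 * (4 * n + 1) * (4 * n + 3) * (2 * n).centralBinom := by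
  have h₁ := Nat.succ_mul_centralBinom_succ (2 * n)
  have h₂ := Nat.succ_mul_centralBinom_succ (2 * n + 1)
  rw [show 2 * n + 1 + 1 = 2 * (n + 1) by ring] at h₂
  refine Nat.eq_of_mul_eq_mul_left two_pos ?_
  linear_combination (2 * n + 1) * h₂ + 2 * (4 * n + 3) * h₁

theorem wzTerm_zero_eq_centralBinom (k : ℕ) :
    wzTerm 0 k = 48 ^ (k + 1) /
      ((k + 1) * (2 * k + 1) * (2 * (k + 1)).centralBinom * (k + 1).centralBinom) := by
  induction k with
  | zero =>
    have h₁ : Nat.centralBinom 1 = 2 := rfl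
    have h₂ : Nat.centralBinom 2 = 6 := rfl
    norm_num [wzTerm, h₁, h₂]
  | succ k ih =>
    have h₁ : ((k + 1 + 1).centralBinom : ℝ) =
        2 * (2 * k + 3) * (k + 1).centralBinom / (k + 2) := by
      rw [eq_div_iff (by positivity), mul_comm]
      exact_mod_cast Nat.succ_mul_centralBinom_succ (k + 1)
    have h₂ : ((2 * (k + 1 + 1)).centralBinom : ℝ) =
        2 * (4 * k + 5) * (4 * k + 7) * (2 * (k + 1)).centralBinom / ((k + 2) * (2 * k + 3)) := by
      rw [eq_div_iff (by positivity), mul_comm]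
      exact_mod_cast mul_centralBinom_two_mul_succ (k + 1)
    rw [wzTerm_succ, ih, wzRatio, h₁, h₂]
    push_cast
    field_simp
    ring

theorem stmt_19 :
    Tendsto (fun N => ∑ k ∈ Finset.range N,
      (2/15) * (48:ℝ)^(k+1) /
        (((k:ℝ)+1) * (2*((k:ℝ)+1) - 1) * ((4*(k+1)).choose (2*(k+1)) : ℝ) *
          ((2*(k+1)).choose (k+1) : ℝ)))
      atTop (𝓝 Lm3at2) := by
  have h : HasSum (fun k => 2 / 15 * wzTerm 0 k) Lm3at2 := by
    have := (summable_wzTerm le_rfl).hasSum.mul_left (2 / 15 : ℝ)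
    rwa [tsum_wzTerm_zero, tsum_wzStepSlope_zero, ← mul_assoc,
      show (2 / 15 : ℝ) * (15 / 2) = 1 by norm_num, one_mul] at this
  refine h.tendsto_sum_nat.congr fun N => Finset.sum_congr rfl fun k _ => ?_
  rw [wzTerm_zero_eq_centralBinom, Nat.centralBinom_eq_two_mul_choose,
    Nat.centralBinom_eq_two_mul_choose, ← mul_assoc 2 2, ← mul_div_assoc, show 2 * 2 = 4 from rfl,
    show 2 * ((k : ℝ) + 1) - 1 = 2 * k + 1 by ring]
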